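/- Let 2 ≤ N ≤ 4, 1 < R < ∞, Ω = B(0,R) \ closure(B(0,1)) ⊂ ℝ^N, and let w : (1,R) → [0,∞) satisfy ∫₁^R w(r) dr < ∞. Then there is a constant C (depending on N, R, w only through ∫₁^R r^{N+1}(∫₁^r t^{1-N}dt) w(r) dr) such that ∫_Ω w(|x|) u² dx ≤ C ∫_Ω |Δu|² dx for all u ∈ C_c^∞(Ω). -/

import Mathlib

open MeasureTheory Set
open scoped ENNReal

/-- The (pointwise) Laplacian `Δu(x) = ∑ i ∂²u/∂x_i²(x)`. -/
noncomputable def lap {N : ℕ} (u : EuclideanSpace ℝ (Fin N) → ℝ)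
    (x : EuclideanSpace ℝ (Fin N)) : ℝ :=
  ∑ i : Fin N, iteratedFDeriv ℝ 2 u x ![EuclideanSpace.single i 1, EuclideanSpace.single i 1]

/-!
On the ray through a unit vector `ω`, Taylor's formula at the inner sphere gives
`u(rω) = ∫ₐʳ (r - t) ∂ω²u(tω) dt`. Bounding `r - t ≤ r` and applying Cauchy–Schwarz with the weight
`t^(n-1)` yields `|u(rω)|² ≤ r² (∫ₐʳ t^(1-n) dt) ∫ₐʳ t^(n-1) |∂ω²u(tω)|² dt`; multiplying by
`r^(n-1) w(r)` and integrating in `r` produces the constant. The second radial derivative is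
dominated by the Hessian, `|∂ω²u|² ≤ |D²u|²`, in polar coordinates the ray integrals of `|D²u|²` add
up to its integral over the annulus, and two integrations by parts show `∫ |D²u|² = ∫ |Δu|²`.
-/

open scoped Laplacian

lemma ofReal_sq_eq_enorm_sq (x : ℝ) : ENNReal.ofReal (x ^ 2) = ‖x‖ₑ ^ 2 := by
  rw [← Real.enorm_of_nonneg (sq_nonneg x), enorm_pow]

section DirectionalDerivative

variable {E : Type*} [NormedAddCommGroup E] [NormedSpace ℝ E] {u f g : E → ℝ} {n m : WithTop ℕ∞}

/-- The directional derivative `∂ᵥu` along a fixed vector `v`, as a function of the base point, so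
that it can be iterated. -/
noncomputable def dirDeriv (v : E) (u : E → ℝ) (x : E) : ℝ :=
  fderiv ℝ u x v

lemma contDiff_dirDeriv (hu : ContDiff ℝ n u) (hmn : m + 1 ≤ n) (v : E) :
    ContDiff ℝ m (dirDeriv v u) :=
  (hu.fderiv_right hmn).clm_apply contDiff_const

lemma tsupport_dirDeriv_subset (v : E) : tsupport (dirDeriv v u) ⊆ tsupport u :=
  tsupport_fderiv_apply_subset ℝ v

lemma hasCompactSupport_dirDeriv (hu : HasCompactSupport u) (v : E) :
    HasCompactSupport (dirDeriv v u) :=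
  hu.fderiv_apply ℝ v

lemma dirDeriv_dirDeriv_apply (hu : ContDiff ℝ 2 u) (v w x : E) :
    dirDeriv v (dirDeriv w u) x = fderiv ℝ (fderiv ℝ u) x v w := by
  have hdiff : DifferentiableAt ℝ (fderiv ℝ u) x :=
    (hu.fderiv_right (m := 1) (by norm_num)).differentiable one_ne_zero x
  change fderiv ℝ (fun y => fderiv ℝ u y w) x v = _
  simp [fderiv_clm_apply hdiff (differentiableAt_const w)]

lemma dirDeriv_comm (hu : ContDiff ℝ 2 u) (v w : E) :
    dirDeriv v (dirDeriv w u) = dirDeriv w (dirDeriv v u) := by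
  ext x
  rw [dirDeriv_dirDeriv_apply hu, dirDeriv_dirDeriv_apply hu]
  exact hu.contDiffAt.isSymmSndFDerivAt (by simp) v w

lemma continuous_dirDeriv_dirDeriv (hu : ContDiff ℝ 2 u) (v w : E) :
    Continuous (dirDeriv v (dirDeriv w u)) :=
  have hw : ContDiff ℝ 1 (dirDeriv w u) := contDiff_dirDeriv hu (by norm_num) w
  (contDiff_dirDeriv (m := 0) hw (by simp) v).continuous

lemma hasDerivAt_comp_smul (hu : Differentiable ℝ u) (v : E) (t : ℝ) :
    HasDerivAt (fun s : ℝ => u (s • v)) (dirDeriv v u (t • v)) t := by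
  have hline : HasDerivAt (fun s : ℝ => s • v) v t := by
    simpa using (hasDerivAt_id t).smul_const v
  exact (hu (t • v)).hasFDerivAt.comp_hasDerivAt t hline

variable [FiniteDimensional ℝ E] [MeasurableSpace E] [BorelSpace E]
  (μ : Measure E) [μ.IsAddHaarMeasure]

lemma integral_mul_dirDeriv (hf : ContDiff ℝ 1 f) (hg : ContDiff ℝ 1 g)
    (hfs : HasCompactSupport f) (v : E) :
    ∫ x, f x * dirDeriv v g x ∂μ = -∫ x, dirDeriv v f x * g x ∂μ := by
  have integrable_mul {φ ψ : E → ℝ} (hφ : Continuous φ) (hψ : Continuous ψ)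
      (hφs : HasCompactSupport φ) : Integrable (fun x => φ x * ψ x) μ :=
    (hφ.mul hψ).integrable_of_hasCompactSupport hφs.mul_right
  have hf' := (contDiff_dirDeriv (m := 0) hf (by simp) v).continuous
  have hg' := (contDiff_dirDeriv (m := 0) hg (by simp) v).continuous
  exact integral_mul_fderiv_eq_neg_fderiv_mul_of_integrable
    (integrable_mul hf' hg.continuous (hasCompactSupport_dirDeriv hfs v))
    (integrable_mul hf.continuous hg' hfs) (integrable_mul hf.continuous hg.continuous hfs)
    (fun x _ => hf.differentiable one_ne_zero x) (fun x _ => hg.differentiable one_ne_zero x)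

lemma integral_dirDeriv_dirDeriv_mul (hu : ContDiff ℝ 3 u) (hus : HasCompactSupport u) (v w : E) :
    ∫ x, dirDeriv v (dirDeriv v u) x * dirDeriv w (dirDeriv w u) x ∂μ =
      ∫ x, dirDeriv v (dirDeriv w u) x ^ 2 ∂μ := by
  have h1 (y : E) : ContDiff ℝ 2 (dirDeriv y u) := contDiff_dirDeriv hu (by norm_num) y
  have h2 (y z : E) : ContDiff ℝ 1 (dirDeriv y (dirDeriv z u)) :=
    contDiff_dirDeriv (h1 z) (by norm_num) y
  have hv : ContDiff ℝ 1 (dirDeriv v u) := (h1 v).of_le (by norm_num)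
  have hvs := hasCompactSupport_dirDeriv hus v
  calc ∫ x, dirDeriv v (dirDeriv v u) x * dirDeriv w (dirDeriv w u) x ∂μ
      = -∫ x, dirDeriv v u x * dirDeriv v (dirDeriv w (dirDeriv w u)) x ∂μ := by
        rw [integral_mul_dirDeriv μ hv (h2 w w) hvs, neg_neg]
    _ = -∫ x, dirDeriv v u x * dirDeriv w (dirDeriv v (dirDeriv w u)) x ∂μ := by
        rw [dirDeriv_comm (h1 w)]
    _ = ∫ x, dirDeriv w (dirDeriv v u) x * dirDeriv v (dirDeriv w u) x ∂μ := by
        rw [integral_mul_dirDeriv μ hv (h2 v w) hvs, neg_neg]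
    _ = ∫ x, dirDeriv v (dirDeriv w u) x ^ 2 ∂μ := by
        simp only [dirDeriv_comm (hu.of_le (by norm_num)) w v, sq]

end DirectionalDerivative

section Hessian

variable {E ι : Type*} [NormedAddCommGroup E] [InnerProductSpace ℝ E] [Fintype ι]
  {u : E → ℝ} (b : OrthonormalBasis ι ℝ E)

/-- The squared Hilbert–Schmidt norm `|D²u|²` of the Hessian, computed in the orthonormal
basis `b`. -/
noncomputable def hessianSq (u : E → ℝ) (x : E) : ℝ :=
  ∑ i, ∑ j, dirDeriv (b i) (dirDeriv (b j) u) x ^ 2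

lemma hessianSq_nonneg (x : E) : 0 ≤ hessianSq b u x :=
  Finset.sum_nonneg fun _ _ => Finset.sum_nonneg fun _ _ => sq_nonneg _

lemma continuous_hessianSq (hu : ContDiff ℝ 2 u) : Continuous (hessianSq b u) :=
  continuous_finsetSum _ fun i _ => continuous_finsetSum _ fun j _ =>
    (continuous_dirDeriv_dirDeriv hu (b i) (b j)).pow 2

lemma sq_dirDeriv_dirDeriv_le_hessianSq (hu : ContDiff ℝ 2 u) {v : E} (hv : ‖v‖ = 1) (x : E) :
    dirDeriv v (dirDeriv v u) x ^ 2 ≤ hessianSq b u x := by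
  have sum_sq_repr : ∑ i, b.repr v i ^ 2 = 1 := by
    rw [← EuclideanSpace.real_norm_sq_eq, LinearIsometryEquiv.norm_map, hv, one_pow]
  have sq_sum_le (c : ι → ℝ) : (∑ i, b.repr v i * c i) ^ 2 ≤ ∑ i, c i ^ 2 := by
    simpa only [sum_sq_repr, one_mul] using
      Finset.sum_mul_sq_le_sq_mul_sq Finset.univ (b.repr v) c
  have expand (L : E →L[ℝ] ℝ) : L v = ∑ i, b.repr v i * L (b i) := by
    conv_lhs => rw [← b.sum_repr v]
    simp only [map_sum, map_smul, smul_eq_mul]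
  simp only [hessianSq, dirDeriv_dirDeriv_apply hu]
  set D := fderiv ℝ (fderiv ℝ u) x
  calc D v v ^ 2 = (∑ i, b.repr v i * D (b i) v) ^ 2 := by
        rw [← D.flip_apply, expand (D.flip v)]
        simp only [D.flip_apply]
    _ ≤ ∑ i, D (b i) v ^ 2 := sq_sum_le _
    _ ≤ ∑ i, ∑ j, D (b i) (b j) ^ 2 := Finset.sum_le_sum fun i _ => by
        rw [expand (D (b i))]
        exact sq_sum_le _

variable [FiniteDimensional ℝ E]

lemma laplacian_eq_sum_dirDeriv (hu : ContDiff ℝ 2 u) :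
    Δ u = fun x => ∑ i, dirDeriv (b i) (dirDeriv (b i) u) x := by
  rw [InnerProductSpace.laplacian_eq_iteratedFDeriv_orthonormalBasis u b]
  simp [dirDeriv_dirDeriv_apply hu, iteratedFDeriv_two_apply]

lemma laplacian_eq_zero_of_notMem_tsupport {x : E} (hx : x ∉ tsupport u) : Δ u x = 0 := by
  have hu : u =ᶠ[nhds x] fun _ => 0 := notMem_tsupport_iff_eventuallyEq.mp hx
  simpa using (InnerProductSpace.laplacian_congr_nhds hu).eq_of_nhds

lemma continuous_laplacian (hu : ContDiff ℝ 2 u) : Continuous (Δ u) := by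
  rw [laplacian_eq_sum_dirDeriv (stdOrthonormalBasis ℝ E) hu]
  exact continuous_finsetSum _ fun i _ => continuous_dirDeriv_dirDeriv hu _ _

variable [MeasurableSpace E] [BorelSpace E] (μ : Measure E) [μ.IsAddHaarMeasure]

theorem integral_sq_laplacian_eq_integral_hessianSq (hu : ContDiff ℝ 3 u)
    (hus : HasCompactSupport u) :
    ∫ x, Δ u x ^ 2 ∂μ = ∫ x, hessianSq b u x ∂μ := by
  have hu2 : ContDiff ℝ 2 u := hu.of_le (by norm_num)
  have integrable_mul (v w v' w' : E) :
      Integrable (fun x => dirDeriv v (dirDeriv w u) x * dirDeriv v' (dirDeriv w' u) x) μ :=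
    ((continuous_dirDeriv_dirDeriv hu2 v w).mul
      (continuous_dirDeriv_dirDeriv hu2 v' w')).integrable_of_hasCompactSupport
      (hasCompactSupport_dirDeriv (hasCompactSupport_dirDeriv hus w) v).mul_right
  have integral_sum_sum {F : ι → ι → E → ℝ} (hF : ∀ i j, Integrable (F i j) μ) :
      ∫ x, ∑ i, ∑ j, F i j x ∂μ = ∑ i, ∑ j, ∫ x, F i j x ∂μ := by
    rw [integral_finsetSum _ fun i _ => integrable_finsetSum _ fun j _ => hF i j]
    exact Finset.sum_congr rfl fun i _ => integral_finsetSum _ fun j _ => hF i j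
  simp only [laplacian_eq_sum_dirDeriv b hu2, sq, Finset.sum_mul_sum, hessianSq]
  rw [integral_sum_sum fun i j => integrable_mul _ _ _ _,
    integral_sum_sum fun i j => integrable_mul _ _ _ _]
  simp only [integral_dirDeriv_dirDeriv_mul μ hu hus, sq]

lemma lintegral_hessianSq_eq_lintegral_laplacian (hu : ContDiff ℝ 3 u)
    (hus : HasCompactSupport u) :
    ∫⁻ x, ENNReal.ofReal (hessianSq b u x) ∂μ = ∫⁻ x, ‖Δ u x‖ₑ ^ 2 ∂μ := by
  have hu2 : ContDiff ℝ 2 u := hu.of_le (by norm_num)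
  have hessian_integrable : Integrable (hessianSq b u) μ := by
    refine (continuous_hessianSq b hu2).integrable_of_hasCompactSupport <|
      HasCompactSupport.intro hus fun x hx => ?_
    simp [hessianSq, dirDeriv_dirDeriv_apply hu2, image_eq_zero_of_notMem_tsupport fun h =>
      hx (tsupport_fderiv_subset ℝ (tsupport_fderiv_subset ℝ h))]
  have laplacian_integrable : Integrable (fun x => Δ u x ^ 2) μ := by
    refine ((continuous_laplacian hu2).pow 2).integrable_of_hasCompactSupport <|
      HasCompactSupport.intro hus fun x hx => ?_
    simp [laplacian_eq_zero_of_notMem_tsupport hx]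
  simp only [← ofReal_sq_eq_enorm_sq]
  rw [← ofReal_integral_eq_lintegral_ofReal hessian_integrable (ae_of_all _ (hessianSq_nonneg b)),
    ← ofReal_integral_eq_lintegral_ofReal laplacian_integrable (ae_of_all _ fun _ => sq_nonneg _),
    integral_sq_laplacian_eq_integral_hessianSq b μ hu hus]

end Hessian

section PolarCoordinates

variable {E : Type*} [NormedAddCommGroup E] {a b : ℝ}

variable (E) in
/-- The open annulus `{x | a < ‖x‖ < b}` centred at the origin. -/
def annulus (a b : ℝ) : Set E :=
  Metric.ball 0 b \ Metric.closedBall 0 a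

lemma mem_annulus {x : E} : x ∈ annulus E a b ↔ ‖x‖ ∈ Ioo a b := by
  simp [annulus, and_comm]

lemma measurableSet_annulus [MeasurableSpace E] [OpensMeasurableSpace E] :
    MeasurableSet (annulus E a b) :=
  measurableSet_ball.diff measurableSet_closedBall

variable [NormedSpace ℝ E]

lemma smul_mem_annulus_iff (ω : Metric.sphere (0 : E) 1) {r : ℝ} (hr : 0 ≤ r) :
    r • (ω : E) ∈ annulus E a b ↔ r ∈ Ioo a b := by
  simp [mem_annulus, norm_smul, abs_of_nonneg hr]

variable [FiniteDimensional ℝ E] [MeasurableSpace E] [BorelSpace E]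
  (μ : Measure E) [μ.IsAddHaarMeasure] {F : E → ℝ≥0∞}

theorem setLIntegral_compl_zero_eq_lintegral_toSphere (hF : Measurable F) :
    ∫⁻ x in {0}ᶜ, F x ∂μ =
      ∫⁻ ω, (∫⁻ r in Ioi (0 : ℝ),
        ENNReal.ofReal (r ^ (Module.finrank ℝ E - 1)) * F (r • (ω : E))) ∂μ.toSphere := by
  have polar := μ.measurePreserving_homeomorphUnitSphereProd.lintegral_comp_emb
    (Homeomorph.measurableEmbedding _) (fun p => F (p.2.1 • p.1.1))
  have norm_smul_direction (x : ({0}ᶜ : Set E)) :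
      (homeomorphUnitSphereProd E x).2.1 • (homeomorphUnitSphereProd E x).1.1 = x.1 := by
    simp [smul_smul, norm_ne_zero_iff.2 x.2]
  simp only [norm_smul_direction] at polar
  rw [← lintegral_subtype_comap (measurableSet_singleton _).compl, polar,
    lintegral_prod _ (by fun_prop)]
  refine lintegral_congr fun ω => ?_
  rw [Measure.volumeIoiPow, lintegral_withDensity_eq_lintegral_mul _ (by fun_prop) (by fun_prop)]
  exact lintegral_subtype_comap measurableSet_Ioi
    fun r => ENNReal.ofReal (r ^ (Module.finrank ℝ E - 1)) * F (r • (ω : E))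

theorem setLIntegral_annulus (ha : 0 ≤ a) (hF : Measurable F) :
    ∫⁻ x in annulus E a b, F x ∂μ =
      ∫⁻ ω, (∫⁻ r in Ioo a b,
        ENNReal.ofReal (r ^ (Module.finrank ℝ E - 1)) * F (r • (ω : E))) ∂μ.toSphere := by
  have annulus_subset : annulus E a b ⊆ {0}ᶜ := fun x hx =>
    norm_pos_iff.1 (ha.trans_lt (mem_annulus.1 hx).1)
  have Ioo_subset : Ioo a b ⊆ Ioi 0 := fun r hr => ha.trans_lt hr.1
  rw [← inter_eq_left.2 annulus_subset, ← setLIntegral_indicator measurableSet_annulus,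
    setLIntegral_compl_zero_eq_lintegral_toSphere μ (hF.indicator measurableSet_annulus)]
  refine lintegral_congr fun ω => ?_
  rw [← inter_eq_left.2 Ioo_subset, ← setLIntegral_indicator measurableSet_Ioo]
  refine setLIntegral_congr_fun measurableSet_Ioi fun r hr => ?_
  by_cases hrab : r ∈ Ioo a b <;> simp [indicator, smul_mem_annulus_iff ω (le_of_lt hr), hrab]

end PolarCoordinates

section OneDimensional

lemma sq_lintegral_le_lintegral_inv_mul_lintegral_mul_sq {α : Type*} [MeasurableSpace α]
    {μ : Measure α} {p f : α → ℝ≥0∞} (hp : AEMeasurable p μ) (hf : AEMeasurable f μ)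
    (hp_zero : ∀ᵐ x ∂μ, p x ≠ 0) (hp_top : ∀ᵐ x ∂μ, p x ≠ ∞) :
    (∫⁻ x, f x ∂μ) ^ 2 ≤ (∫⁻ x, (p x)⁻¹ ∂μ) * ∫⁻ x, p x * f x ^ 2 ∂μ := by
  have sq_rpow_half (c : ℝ≥0∞) : (c ^ (1 / 2 : ℝ)) ^ 2 = c := by
    rw [← ENNReal.rpow_natCast, ← ENNReal.rpow_mul]
    norm_num
  have split : ∀ᵐ x ∂μ, f x = (p x)⁻¹ ^ (1 / 2 : ℝ) * (p x * f x ^ 2) ^ (1 / 2 : ℝ) := by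
    filter_upwards [hp_zero, hp_top] with x h0 htop
    rw [← ENNReal.mul_rpow_of_nonneg _ _ (by norm_num), ← mul_assoc, ENNReal.inv_mul_cancel h0 htop,
      one_mul, ← ENNReal.rpow_natCast, ← ENNReal.rpow_mul]
    norm_num
  calc (∫⁻ x, f x ∂μ) ^ 2
      = (∫⁻ x, (p x)⁻¹ ^ (1 / 2 : ℝ) * (p x * f x ^ 2) ^ (1 / 2 : ℝ) ∂μ) ^ 2 := by
        rw [lintegral_congr_ae split]
    _ ≤ ((∫⁻ x, (p x)⁻¹ ∂μ) ^ (1 / 2 : ℝ) * (∫⁻ x, p x * f x ^ 2 ∂μ) ^ (1 / 2 : ℝ)) ^ 2 := by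
        gcongr
        exact ENNReal.lintegral_mul_norm_pow_le hp.inv (hp.mul (hf.pow_const 2)) (by norm_num)
          (by norm_num) (by norm_num)
    _ = (∫⁻ x, (p x)⁻¹ ∂μ) * ∫⁻ x, p x * f x ^ 2 ∂μ := by
        rw [mul_pow, sq_rpow_half, sq_rpow_half]

variable {f f' f'' : ℝ → ℝ} {a r : ℝ}

lemma eq_integral_sub_mul_of_hasDerivAt (hf : ∀ t, HasDerivAt f (f' t) t)
    (hf' : ∀ t, HasDerivAt f' (f'' t) t) (hf'' : Continuous f'') (hfa : f a = 0)
    (hfa' : f' a = 0) : f r = ∫ t in a..r, (r - t) * f'' t := by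
  have primitive (t : ℝ) : HasDerivAt (fun s => f s + (r - s) * f' s) ((r - t) * f'' t) t := by
    refine ((hf t).add (((hasDerivAt_id t).const_sub r).mul (hf' t))).congr_deriv ?_
    simp only [id_eq]
    ring
  rw [intervalIntegral.integral_eq_sub_of_hasDerivAt (fun t _ => primitive t)
    (Continuous.intervalIntegrable (by fun_prop) a r)]
  simp [hfa, hfa']

lemma enorm_le_mul_lintegral_enorm_of_hasDerivAt (har : a ≤ r) (hf : ∀ t, HasDerivAt f (f' t) t)
    (hf' : ∀ t, HasDerivAt f' (f'' t) t) (hf'' : Continuous f'') (hfa : f a = 0)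
    (hfa' : f' a = 0) : ‖f r‖ₑ ≤ ENNReal.ofReal (r - a) * ∫⁻ t in Ioo a r, ‖f'' t‖ₑ := by
  rw [eq_integral_sub_mul_of_hasDerivAt hf hf' hf'' hfa hfa',
    intervalIntegral.integral_of_le har, integral_Ioc_eq_integral_Ioo,
    ← lintegral_const_mul _ (by fun_prop)]
  refine (enorm_integral_le_lintegral_enorm _).trans <|
    setLIntegral_mono' measurableSet_Ioo fun t ht => ?_
  rw [enorm_mul, Real.enorm_of_nonneg (sub_nonneg.2 ht.2.le)]
  gcongr
  exact ht.1.le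

lemma inv_ofReal_pow_pred {n : ℕ} (hn : 1 ≤ n) {t : ℝ} (ht : 0 < t) :
    (ENNReal.ofReal (t ^ (n - 1)))⁻¹ = ENNReal.ofReal (t ^ ((1 : ℝ) - n)) := by
  rw [← ENNReal.ofReal_inv_of_pos (by positivity), ← Real.rpow_natCast, ← Real.rpow_neg ht.le,
    Nat.cast_pred hn, neg_sub]

theorem enorm_sq_le_mul_lintegral_pow_mul_sq {n : ℕ} (hn : 1 ≤ n) (ha : 0 ≤ a) (har : a ≤ r)
    (hf : ∀ t, HasDerivAt f (f' t) t) (hf' : ∀ t, HasDerivAt f' (f'' t) t)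
    (hf'' : Continuous f'') (hfa : f a = 0) (hfa' : f' a = 0) :
    ‖f r‖ₑ ^ 2 ≤ ENNReal.ofReal (r ^ 2) * (∫⁻ t in Ioo a r, ENNReal.ofReal (t ^ ((1 : ℝ) - n))) *
      ∫⁻ t in Ioo a r, ENNReal.ofReal (t ^ (n - 1)) * ‖f'' t‖ₑ ^ 2 := by
  have weight_ne_zero : ∀ᵐ t ∂volume.restrict (Ioo a r), ENNReal.ofReal (t ^ (n - 1)) ≠ 0 := by
    filter_upwards [ae_restrict_mem measurableSet_Ioo] with t ht
    exact (ENNReal.ofReal_pos.2 (pow_pos (ha.trans_lt ht.1) _)).ne'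
  calc ‖f r‖ₑ ^ 2 ≤ (ENNReal.ofReal r * ∫⁻ t in Ioo a r, ‖f'' t‖ₑ) ^ 2 := by
        gcongr
        refine (enorm_le_mul_lintegral_enorm_of_hasDerivAt har hf hf' hf'' hfa hfa').trans ?_
        gcongr
        linarith
    _ = ENNReal.ofReal (r ^ 2) * (∫⁻ t in Ioo a r, ‖f'' t‖ₑ) ^ 2 := by
        rw [mul_pow, ENNReal.ofReal_pow (ha.trans har)]
    _ ≤ ENNReal.ofReal (r ^ 2) * ((∫⁻ t in Ioo a r, (ENNReal.ofReal (t ^ (n - 1)))⁻¹) *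
          ∫⁻ t in Ioo a r, ENNReal.ofReal (t ^ (n - 1)) * ‖f'' t‖ₑ ^ 2) := by
        gcongr
        exact sq_lintegral_le_lintegral_inv_mul_lintegral_mul_sq (by fun_prop) (by fun_prop)
          weight_ne_zero (ae_of_all _ fun _ => ENNReal.ofReal_ne_top)
    _ = _ := by
        rw [mul_assoc, setLIntegral_congr_fun measurableSet_Ioo fun t ht =>
          inv_ofReal_pow_pred hn (ha.trans_lt ht.1)]

end OneDimensional

section RadialConstant

variable {a R : ℝ}

lemma measurable_setLIntegral_Ioo (g : ℝ → ℝ≥0∞) : Measurable fun r => ∫⁻ t in Ioo a r, g t :=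
  Monotone.measurable fun _ _ h => lintegral_mono_set (Ioo_subset_Ioo_right h)

lemma integrableOn_rpow_Ioo (ha : 0 < a) (s : ℝ) :
    IntegrableOn (fun t : ℝ => t ^ s) (Ioo a R) := by
  refine (ContinuousOn.integrableOn_Icc fun t ht => ?_).mono_set Ioo_subset_Icc_self
  exact (Real.continuousAt_rpow_const t s (.inl (ha.trans_le ht.1).ne')).continuousWithinAt

lemma rpow_nonneg_on_Ioo (ha : 0 < a) (s : ℝ) :
    0 ≤ᵐ[volume.restrict (Ioo a R)] fun t : ℝ => t ^ s := by
  filter_upwards [ae_restrict_mem measurableSet_Ioo] with t ht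
  exact Real.rpow_nonneg (ha.trans ht.1).le s

lemma monotone_setIntegral_rpow_Ioo (ha : 0 < a) (s : ℝ) :
    Monotone fun r => ∫ t in Ioo a r, t ^ s := fun _ _ h =>
  setIntegral_mono_set (integrableOn_rpow_Ioo ha s) (rpow_nonneg_on_Ioo ha s)
    (Ioo_subset_Ioo_right h).eventuallyLE

lemma integrableOn_pow_mul_setIntegral_rpow_mul (ha : 0 < a) (m : ℕ) (s : ℝ) {w : ℝ → ℝ}
    (hInt : IntegrableOn w (Ioo a R)) :
    IntegrableOn (fun r => r ^ m * (∫ t in Ioo a r, t ^ s) * w r) (Ioo a R) := by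
  have mono := monotone_setIntegral_rpow_Ioo ha s
  have inner_nonneg (r : ℝ) : 0 ≤ ∫ t in Ioo a r, t ^ s :=
    integral_nonneg_of_ae (rpow_nonneg_on_Ioo ha s)
  refine hInt.bdd_mul (c := R ^ m * ∫ t in Ioo a R, t ^ s)
    (Measurable.mul (by fun_prop) mono.measurable).aestronglyMeasurable ?_
  filter_upwards [ae_restrict_mem measurableSet_Ioo] with r hr
  have hr0 : 0 < r := ha.trans hr.1
  rw [Real.norm_of_nonneg (mul_nonneg (by positivity) (inner_nonneg r))]
  exact mul_le_mul (pow_le_pow_left₀ hr0.le hr.2.le m) (mono hr.2.le) (inner_nonneg r)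
    (pow_nonneg (hr0.trans hr.2).le m)

lemma ofReal_setIntegral_pow_mul_setIntegral_rpow_mul (ha : 0 < a) {m : ℕ} {s : ℝ} {w : ℝ → ℝ}
    (hw0 : ∀ r ∈ Ioo a R, 0 ≤ w r)
    (hInt : IntegrableOn (fun r => r ^ m * (∫ t in Ioo a r, t ^ s) * w r) (Ioo a R)) :
    ENNReal.ofReal (∫ r in Ioo a R, r ^ m * (∫ t in Ioo a r, t ^ s) * w r) =
      ∫⁻ r in Ioo a R, ENNReal.ofReal (r ^ m) *
        (∫⁻ t in Ioo a r, ENNReal.ofReal (t ^ s)) * ENNReal.ofReal (w r) := by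
  have factor_nonneg (r : ℝ) (hr : r ∈ Ioo a R) : 0 ≤ r ^ m * ∫ t in Ioo a r, t ^ s :=
    mul_nonneg (pow_nonneg (ha.trans hr.1).le m)
      (integral_nonneg_of_ae (rpow_nonneg_on_Ioo ha s))
  rw [ofReal_integral_eq_lintegral_ofReal hInt]
  · refine setLIntegral_congr_fun measurableSet_Ioo fun r hr => ?_
    rw [ENNReal.ofReal_mul (factor_nonneg r hr),
      ENNReal.ofReal_mul (pow_nonneg (ha.trans hr.1).le m),
      ofReal_integral_eq_lintegral_ofReal (integrableOn_rpow_Ioo ha s) (rpow_nonneg_on_Ioo ha s)]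
  · filter_upwards [ae_restrict_mem measurableSet_Ioo] with r hr
    exact mul_nonneg (factor_nonneg r hr) (hw0 r hr)

end RadialConstant

section WeightedInequality

variable {E : Type*} [NormedAddCommGroup E] {u : E → ℝ} {a R : ℝ}

theorem setLIntegral_ray_weight_mul_sq_le [NormedSpace ℝ E] {n : ℕ} (hn : 1 ≤ n) (ha : 0 ≤ a)
    {w : ℝ → ℝ≥0∞} (hw : Measurable w) (hu : ContDiff ℝ 2 u) {v : E}
    (hv : a • v ∉ tsupport u) :
    ∫⁻ r in Ioo a R, ENNReal.ofReal (r ^ (n - 1)) * (w r * ‖u (r • v)‖ₑ ^ 2) ≤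
      (∫⁻ r in Ioo a R, ENNReal.ofReal (r ^ (n + 1)) *
        (∫⁻ t in Ioo a r, ENNReal.ofReal (t ^ ((1 : ℝ) - n))) * w r) *
      ∫⁻ t in Ioo a R, ENNReal.ofReal (t ^ (n - 1)) *
        ‖dirDeriv v (dirDeriv v u) (t • v)‖ₑ ^ 2 := by
  have hu' : ContDiff ℝ 1 (dirDeriv v u) := contDiff_dirDeriv hu (by norm_num) v
  have hu'' : Continuous fun t : ℝ => dirDeriv v (dirDeriv v u) (t • v) :=
    (continuous_dirDeriv_dirDeriv hu v v).comp (by fun_prop)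
  have measurable_weight : Measurable fun r => ENNReal.ofReal (r ^ (n + 1)) *
      (∫⁻ t in Ioo a r, ENNReal.ofReal (t ^ ((1 : ℝ) - n))) * w r :=
    (Measurable.mul (by fun_prop) (measurable_setLIntegral_Ioo _)).mul hw
  rw [← lintegral_mul_const _ measurable_weight]
  refine setLIntegral_mono' measurableSet_Ioo fun r hr => ?_
  have hr0 : 0 ≤ r := ha.trans hr.1.le
  have radial_bound := enorm_sq_le_mul_lintegral_pow_mul_sq hn ha hr.1.le
    (hasDerivAt_comp_smul (hu.differentiable two_ne_zero) v)
    (hasDerivAt_comp_smul (hu'.differentiable one_ne_zero) v) hu''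
    (image_eq_zero_of_notMem_tsupport hv)
    (image_eq_zero_of_notMem_tsupport fun h => hv (tsupport_dirDeriv_subset v h))
  set K := ∫⁻ t in Ioo a r, ENNReal.ofReal (t ^ ((1 : ℝ) - n))
  set H : ℝ → ℝ≥0∞ := fun t => ENNReal.ofReal (t ^ (n - 1)) *
    ‖dirDeriv v (dirDeriv v u) (t • v)‖ₑ ^ 2
  calc ENNReal.ofReal (r ^ (n - 1)) * (w r * ‖u (r • v)‖ₑ ^ 2)
      ≤ ENNReal.ofReal (r ^ (n - 1)) *
          (w r * (ENNReal.ofReal (r ^ 2) * K * ∫⁻ t in Ioo a R, H t)) := by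
        gcongr
        refine radial_bound.trans ?_
        gcongr
        exact hr.2.le
    _ = ENNReal.ofReal (r ^ (n - 1)) * ENNReal.ofReal (r ^ 2) * K * w r *
          ∫⁻ t in Ioo a R, H t := by ring
    _ = ENNReal.ofReal (r ^ (n + 1)) * K * w r * ∫⁻ t in Ioo a R, H t := by
        rw [← ENNReal.ofReal_mul (pow_nonneg hr0 _), ← pow_add,
          show n - 1 + 2 = n + 1 by omega]

variable [InnerProductSpace ℝ E] [FiniteDimensional ℝ E]

theorem setLIntegral_sphere_ray_weight_mul_sq_le {ι : Type*} [Fintype ι]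
    (b : OrthonormalBasis ι ℝ E) (ha : 0 ≤ a) {w : ℝ → ℝ≥0∞} (hw : Measurable w)
    (hu : ContDiff ℝ 2 u) (hsupp : tsupport u ⊆ annulus E a R) (ω : Metric.sphere (0 : E) 1) :
    ∫⁻ r in Ioo a R, ENNReal.ofReal (r ^ (Module.finrank ℝ E - 1)) *
        (w ‖r • (ω : E)‖ * ‖u (r • (ω : E))‖ₑ ^ 2) ≤
      (∫⁻ r in Ioo a R, ENNReal.ofReal (r ^ (Module.finrank ℝ E + 1)) *
        (∫⁻ t in Ioo a r, ENNReal.ofReal (t ^ ((1 : ℝ) - Module.finrank ℝ E))) * w r) *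
      ∫⁻ t in Ioo a R, ENNReal.ofReal (t ^ (Module.finrank ℝ E - 1)) *
        ENNReal.ofReal (hessianSq b u (t • (ω : E))) := by
  have hω : ‖(ω : E)‖ = 1 := norm_eq_of_mem_sphere ω
  have : Nontrivial E := nontrivial_of_ne _ 0 (norm_ne_zero_iff.1 (hω ▸ one_ne_zero))
  have boundary_notMem : a • (ω : E) ∉ tsupport u := fun h =>
    lt_irrefl a ((smul_mem_annulus_iff ω ha).1 (hsupp h)).1
  have norm_smul_ω (r : ℝ) (hr : r ∈ Ioo a R) : ‖r • (ω : E)‖ = r := by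
    rw [norm_smul, hω, mul_one, Real.norm_of_nonneg (ha.trans hr.1.le)]
  rw [setLIntegral_congr_fun measurableSet_Ioo fun r hr => by rw [norm_smul_ω r hr]]
  refine (setLIntegral_ray_weight_mul_sq_le Module.finrank_pos ha hw hu boundary_notMem).trans ?_
  gcongr with t
  rw [← ofReal_sq_eq_enorm_sq]
  exact ENNReal.ofReal_le_ofReal (sq_dirDeriv_dirDeriv_le_hessianSq b hu hω _)

variable [MeasurableSpace E] [BorelSpace E] (μ : Measure E) [μ.IsAddHaarMeasure]

lemma setLIntegral_hessianSq_le_setLIntegral_laplacian {ι : Type*} [Fintype ι]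
    (b : OrthonormalBasis ι ℝ E) (hu : ContDiff ℝ 3 u) (hus : HasCompactSupport u) {s : Set E}
    (hs : tsupport u ⊆ s) :
    ∫⁻ x in s, ENNReal.ofReal (hessianSq b u x) ∂μ ≤ ∫⁻ x in s, ‖Δ u x‖ₑ ^ 2 ∂μ := by
  have support_subset : (Function.support fun x => ‖Δ u x‖ₑ ^ 2) ⊆ s := by
    refine fun x hx => hs (by_contra fun hxu => hx ?_)
    simp [laplacian_eq_zero_of_notMem_tsupport hxu]
  rw [setLIntegral_eq_of_support_subset support_subset,
    ← lintegral_hessianSq_eq_lintegral_laplacian b μ hu hus]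
  exact setLIntegral_le_lintegral _ _

theorem setLIntegral_annulus_weight_mul_sq_le (ha : 0 ≤ a) {w : ℝ → ℝ≥0∞} (hw : Measurable w)
    (hu : ContDiff ℝ 3 u) (hsupp : tsupport u ⊆ annulus E a R) :
    ∫⁻ x in annulus E a R, w ‖x‖ * ‖u x‖ₑ ^ 2 ∂μ ≤
      (∫⁻ r in Ioo a R, ENNReal.ofReal (r ^ (Module.finrank ℝ E + 1)) *
        (∫⁻ t in Ioo a r, ENNReal.ofReal (t ^ ((1 : ℝ) - Module.finrank ℝ E))) * w r) *
      ∫⁻ x in annulus E a R, ‖Δ u x‖ₑ ^ 2 ∂μ := by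
  have hu2 : ContDiff ℝ 2 u := hu.of_le (by norm_num)
  have hus : HasCompactSupport u := Metric.isCompact_of_isClosed_isBounded (isClosed_tsupport u)
    (Metric.isBounded_ball.subset (hsupp.trans sdiff_subset))
  have hu_meas : Measurable u := hu.continuous.measurable
  let b := stdOrthonormalBasis ℝ E
  have hb : Measurable (hessianSq b u) := (continuous_hessianSq b hu2).measurable
  let hessianOnRay (ω : Metric.sphere (0 : E) 1) : ℝ≥0∞ := ∫⁻ t in Ioo a R,
    ENNReal.ofReal (t ^ (Module.finrank ℝ E - 1)) * ENNReal.ofReal (hessianSq b u (t • (ω : E)))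
  have measurable_hessianOnRay : Measurable hessianOnRay :=
    Measurable.lintegral_prod_right' (f := fun p : Metric.sphere (0 : E) 1 × ℝ =>
      ENNReal.ofReal (p.2 ^ (Module.finrank ℝ E - 1)) *
        ENNReal.ofReal (hessianSq b u (p.2 • (p.1 : E)))) (by fun_prop)
  set C := ∫⁻ r in Ioo a R, ENNReal.ofReal (r ^ (Module.finrank ℝ E + 1)) *
    (∫⁻ t in Ioo a r, ENNReal.ofReal (t ^ ((1 : ℝ) - Module.finrank ℝ E))) * w r
  calc ∫⁻ x in annulus E a R, w ‖x‖ * ‖u x‖ₑ ^ 2 ∂μ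
      = ∫⁻ ω, (∫⁻ r in Ioo a R, ENNReal.ofReal (r ^ (Module.finrank ℝ E - 1)) *
          (w ‖r • (ω : E)‖ * ‖u (r • (ω : E))‖ₑ ^ 2)) ∂μ.toSphere :=
        setLIntegral_annulus μ ha (by fun_prop)
    _ ≤ ∫⁻ ω, C * hessianOnRay ω ∂μ.toSphere :=
        lintegral_mono (setLIntegral_sphere_ray_weight_mul_sq_le b ha hw hu2 hsupp)
    _ = C * ∫⁻ x in annulus E a R, ENNReal.ofReal (hessianSq b u x) ∂μ := by
        rw [lintegral_const_mul _ measurable_hessianOnRay,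
          setLIntegral_annulus μ ha (by fun_prop)]
    _ ≤ C * ∫⁻ x in annulus E a R, ‖Δ u x‖ₑ ^ 2 ∂μ :=
        mul_le_mul' le_rfl (setLIntegral_hessianSq_le_setLIntegral_laplacian μ b hu hus hsupp)

theorem annulus_weight_admissible_general (ha : 0 < a) {w : ℝ → ℝ} (hw : Measurable w)
    (hw0 : ∀ r ∈ Ioo a R, 0 ≤ w r)
    (hInt : IntegrableOn (fun r => r ^ (Module.finrank ℝ E + 1) *
      (∫ t in Ioo a r, t ^ ((1 : ℝ) - Module.finrank ℝ E)) * w r) (Ioo a R))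
    (hu : ContDiff ℝ 3 u) (hsupp : tsupport u ⊆ annulus E a R) :
    ∫⁻ x in annulus E a R, ENNReal.ofReal (w ‖x‖ * u x ^ 2) ∂μ ≤
      ENNReal.ofReal (∫ r in Ioo a R, r ^ (Module.finrank ℝ E + 1) *
        (∫ t in Ioo a r, t ^ ((1 : ℝ) - Module.finrank ℝ E)) * w r) *
      ∫⁻ x in annulus E a R, ENNReal.ofReal (Δ u x ^ 2) ∂μ := by
  simp only [ENNReal.ofReal_mul' (sq_nonneg _), ofReal_sq_eq_enorm_sq]
  rw [ofReal_setIntegral_pow_mul_setIntegral_rpow_mul ha hw0 hInt]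
  exact setLIntegral_annulus_weight_mul_sq_le μ ha.le hw.ennreal_ofReal hu hsupp

end WeightedInequality

lemma lap_eq_laplacian {N : ℕ} (u : EuclideanSpace ℝ (Fin N) → ℝ) : lap u = Δ u := by
  rw [InnerProductSpace.laplacian_eq_iteratedFDeriv_orthonormalBasis u
    (EuclideanSpace.basisFun (Fin N) ℝ)]
  simp [lap, funext_iff]

/-- Let `2 ≤ N ≤ 4`, `1 < R < ∞`, `Ω = B(0,R) \ closure B(0,1)` and
`w : (1,R) → [0,∞)` integrable.  Then with the constant
`C = ∫₁^R r^{N+1} (∫₁^r t^{1-N} dt) w(r) dr`, one has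
`∫_Ω w(|x|) u² ≤ C ∫_Ω |Δu|²` for every `u ∈ C_c^∞(Ω)`. -/
theorem annulus_weight_admissible (N : ℕ) (hN2 : 2 ≤ N) (hN4 : N ≤ 4) (R : ℝ) (hR : 1 < R)
    (w : ℝ → ℝ) (hw : Measurable w) (hw0 : ∀ r, 1 < r → r < R → 0 ≤ w r)
    (hInt : IntegrableOn w (Ioo (1 : ℝ) R)) :
    ∃ C : ℝ,
      C = (∫ r in Ioo (1 : ℝ) R,
        r ^ (N + 1) * (∫ t in Ioo (1 : ℝ) r, t ^ ((1 : ℝ) - N)) * w r) ∧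
      ∀ u : EuclideanSpace ℝ (Fin N) → ℝ, ContDiff ℝ (⊤ : ℕ∞) u → HasCompactSupport u →
        tsupport u ⊆
          Metric.ball (0 : EuclideanSpace ℝ (Fin N)) R \
            Metric.closedBall (0 : EuclideanSpace ℝ (Fin N)) 1 →
        ∫⁻ x in Metric.ball (0 : EuclideanSpace ℝ (Fin N)) R \
              Metric.closedBall (0 : EuclideanSpace ℝ (Fin N)) 1,
            ENNReal.ofReal (w ‖x‖ * u x ^ 2)
          ≤ ENNReal.ofReal C *
            ∫⁻ x in Metric.ball (0 : EuclideanSpace ℝ (Fin N)) R \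
                Metric.closedBall (0 : EuclideanSpace ℝ (Fin N)) 1,
              ENNReal.ofReal ((lap u x) ^ 2) := by
  refine ⟨_, rfl, fun u hu _ hsupp => ?_⟩
  simpa only [finrank_euclideanSpace_fin, lap_eq_laplacian, annulus] using
    annulus_weight_admissible_general volume one_pos hw (fun r hr => hw0 r hr.1 hr.2)
      (integrableOn_pow_mul_setIntegral_rpow_mul one_pos _ _ hInt) (contDiff_infty.1 hu 3) hsupp
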